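/- arXiv:1303.0788 — 4 statements merged into one kernel-verified Lean document; each statement's English description precedes it below -/
import Mathlib

section
/- Let B be a type with the discrete topology, let ℕ → B carry the product topology, let A : Set B be countable, equip ↥A with the discrete topology and ℕ → ℕ → ↥A appropriately, with ℕ → ↥A carrying the product topology, and let ι : (ℕ → ↥A) → (ℕ → B) be the map x ↦ (fun n => (x n : B)). If O ⊆ (ℕ → ↥A) is open in ℕ → ↥A, then there exists a family F : ℕ → Set (ℕ → B) of closed subsets of ℕ → B such that ι '' O = ⋃ n, F n. (An open set of A^ω becomes a Σ⁰₂ set, i.e., a countable union of closed sets, when the alphabet is expanded to B.) -/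
theorem open_set_becomes_sigma02
    (B : Type*) [TopologicalSpace B] [DiscreteTopology B] (A : Set B)
    (hA : A.Countable) (O : Set (ℕ → ↥A)) (hO : IsOpen O) :
    ∃ F : ℕ → Set (ℕ → B), (∀ n, IsClosed (F n)) ∧
      (fun (x : ℕ → ↥A) (n : ℕ) => (x n : B)) '' O = ⋃ n, F n := by
  have hι : Topology.IsClosedEmbedding (fun (x : ℕ → ↥A) (n : ℕ) => (x n : B)) := by
    refine ⟨Topology.IsEmbedding.piMap (fun _ : ℕ => Topology.IsEmbedding.subtypeVal), ?_⟩
    have h : Set.range (fun (x : ℕ → ↥A) (n : ℕ) => (x n : B)) = Set.pi Set.univ (fun _ => A) := by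
      ext y
      constructor
      · rintro ⟨x, rfl⟩ n _
        exact (x n).2
      · intro hy
        exact ⟨fun n => ⟨y n, hy n trivial⟩, rfl⟩
    rw [h]
    exact isClosed_set_pi fun _ _ => isClosed_discrete A
  letI : MetricSpace (ℕ → ↥A) := PiNat.metricSpace
  obtain ⟨F, hF, -, hU, -⟩ := hO.exists_iUnion_isClosed
  refine ⟨fun n => (fun (x : ℕ → ↥A) (n : ℕ) => (x n : B)) '' F n,
    fun n => hι.isClosedMap _ (hF n), ?_⟩
  rw [← hU, Set.image_iUnion]
end

section
/- Let B be a type with the discrete topology, let ℕ → B carry the product topology, let A : Set B, equip ↥A with the discrete topology and ℕ → ↥A with the product topology, and let ι : (ℕ → ↥A) → (ℕ → B) be the map x ↦ (fun n => (x n : B)). Assume A contains two distinct elements and there exists b : B with b ∉ A. Then there exists a set O ⊆ (ℕ → ↥A) that is open in ℕ → ↥A such that ι '' O is neither open nor closed in ℕ → B. (The jump of open sets from Σ⁰₁ in A^ω to Σ⁰₂ in B^ω is realized: some open set of A^ω lands outside Σ⁰₁ ∪ Π⁰₁ of B^ω.) -/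
theorem tendsto_update_self_aux {X : Type*} [TopologicalSpace X] (x : ℕ → X) (c : X) :
    Filter.Tendsto (fun n : ℕ => Function.update x n c) Filter.atTop (nhds x) := by
  rw [tendsto_pi_nhds]
  intro k
  apply tendsto_const_nhds.congr'
  filter_upwards [Filter.eventually_gt_atTop k] with n hn
  rw [Function.update_of_ne (by omega)]

theorem exists_open_set_image_neither_open_nor_closed
    (B : Type*) [TopologicalSpace B] [DiscreteTopology B] (A : Set B)
    (hA : ∃ a₁ ∈ A, ∃ a₂ ∈ A, a₁ ≠ a₂) (hB : ∃ b : B, b ∉ A) :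
    ∃ O : Set (ℕ → ↥A), IsOpen O ∧
      ¬ IsOpen ((fun (x : ℕ → ↥A) (n : ℕ) => (x n : B)) '' O) ∧
      ¬ IsClosed ((fun (x : ℕ → ↥A) (n : ℕ) => (x n : B)) '' O) := by
  obtain ⟨a₁, h₁, a₂, h₂, hne⟩ := hA
  obtain ⟨b, hb⟩ := hB
  refine ⟨{fun _ => (⟨a₁, h₁⟩ : A)}ᶜ, isOpen_compl_singleton, ?_, ?_⟩
  · intro ho
    have hmem : (fun _ : ℕ => a₂) ∈ ((fun (x : ℕ → ↥A) (n : ℕ) => (x n : B)) ''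
        {fun _ => (⟨a₁, h₁⟩ : A)}ᶜ) := by
      refine ⟨fun _ => ⟨a₂, h₂⟩, ?_, rfl⟩
      intro h
      have := congrArg Subtype.val (congrFun h 0)
      exact hne this.symm
    obtain ⟨n, x, -, hx⟩ :=
      ((tendsto_update_self_aux (fun _ : ℕ => a₂) b).eventually (ho.mem_nhds hmem)).exists
    have := congrFun hx n
    simp only [Function.update_self] at this
    exact hb (this ▸ (x n).2)
  · intro hc
    have hmem := hc.mem_of_tendsto (tendsto_update_self_aux (fun _ : ℕ => a₁) a₂)
      (Filter.Eventually.of_forall fun n => by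
        refine ⟨Function.update (fun _ => ⟨a₁, h₁⟩) n ⟨a₂, h₂⟩, ?_, ?_⟩
        · intro h
          have := congrArg Subtype.val (congrFun h n)
          simp only [Function.update_self] at this
          exact hne this.symm
        · funext k
          by_cases hk : k = n
          · subst hk; simp
          · simp [Function.update_of_ne hk])
    obtain ⟨x, hx, hxe⟩ := hmem
    apply hx
    funext k
    exact Subtype.ext (congrFun hxe k)
end

section
/- Let B be a type with the discrete topology, let ℕ → B carry the product topology, let A : Set B be countable, equip ↥A with the discrete topology and ℕ → ↥A with the product topology, and let ι : (ℕ → ↥A) → (ℕ → B) be the map x ↦ (fun n => (x n : B)). If S ⊆ (ℕ → ↥A) is a Gδ set in ℕ → ↥A (a countable intersection of open sets), then there exists a doubly indexed family F : ℕ → ℕ → Set (ℕ → B) of sets closed in ℕ → B such that ι '' S = ⋂ i, ⋃ j, F i j. (A Π⁰₂ set of A^ω lands in Π⁰₃ — countable intersections of countable unions of closed sets — when the alphabet is expanded to B.) -/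
theorem pi02_lands_in_pi03
    (B : Type*) [TopologicalSpace B] [DiscreteTopology B] (A : Set B)
    (hA : A.Countable) (S : Set (ℕ → ↥A)) (U : ℕ → Set (ℕ → ↥A))
    (hU : ∀ i, IsOpen (U i)) (hS : S = ⋂ i, U i) :
    ∃ F : ℕ → ℕ → Set (ℕ → B), (∀ i j, IsClosed (F i j)) ∧
      (fun (x : ℕ → ↥A) (n : ℕ) => (x n : B)) '' S = ⋂ i, ⋃ j, F i j := by
  have hι : Topology.IsClosedEmbedding (fun (x : ℕ → ↥A) (n : ℕ) => (x n : B)) :=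
    Topology.IsClosedEmbedding.piMap fun _ : ℕ =>
      (isClosed_discrete A).isClosedEmbedding_subtypeVal
  haveI : Countable ↥A := hA.to_subtype
  letI : MetricSpace (ℕ → ↥A) := TopologicalSpace.metrizableSpaceMetric (ℕ → ↥A)
  have h : ∀ i, ∃ G : ℕ → Set (ℕ → ↥A), (∀ j, IsClosed (G j)) ∧ U i = ⋃ j, G j := by
    intro i
    obtain ⟨V, hV, hVU⟩ := (hU i).isClosed_compl.isGδ.eq_iInter_nat
    refine ⟨fun j => (V j)ᶜ, fun j => (hV j).isClosed_compl, ?_⟩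
    rw [← Set.compl_iInter, ← hVU, compl_compl]
  choose G hG hGU using h
  refine ⟨fun i j => (fun (x : ℕ → ↥A) (n : ℕ) => (x n : B)) '' G i j,
    fun i j => hι.isClosedMap _ (hG i j), ?_⟩
  rw [hS, hι.injective.injOn.image_iInter_eq]
  simp only [hGU, Set.image_iUnion]
end

section
/- Let B be a type with the discrete topology, let ℕ → B carry the product topology, let A : Set B be countable, equip ↥A with the discrete topology and ℕ → ↥A with the product topology, and let ι : (ℕ → ↥A) → (ℕ → B) be the map x ↦ (fun n => (x n : B)). If S ⊆ (ℕ → ↥A) satisfies S = ⋃ i, G i where each G i is a Gδ set in ℕ → ↥A, then there exists a triply indexed family F : ℕ → ℕ → ℕ → Set (ℕ → B) of sets closed in ℕ → B such that ι '' S = ⋃ i, ⋂ j, ⋃ k, F i j k. (A Σ⁰₃ set of A^ω lands in Σ⁰₄ when the alphabet is expanded to B.) -/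
theorem sigma03_lands_in_sigma04
    (B : Type*) [TopologicalSpace B] [DiscreteTopology B] (A : Set B)
    (hA : A.Countable) (S : Set (ℕ → ↥A)) (G : ℕ → Set (ℕ → ↥A))
    (hG : ∀ i, IsGδ (G i)) (hS : S = ⋃ i, G i) :
    ∃ F : ℕ → ℕ → ℕ → Set (ℕ → B), (∀ i j k, IsClosed (F i j k)) ∧
      (fun (x : ℕ → ↥A) (n : ℕ) => (x n : B)) '' S = ⋃ i, ⋂ j, ⋃ k, F i j k := by
  have hinj : Function.Injective (fun (x : ℕ → ↥A) (n : ℕ) => (x n : B)) := by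
    intro x y h
    funext n
    exact Subtype.ext (congrFun h n)
  have hcl : Topology.IsClosedEmbedding (fun (x : ℕ → ↥A) (n : ℕ) => (x n : B)) := by
    refine ⟨Topology.IsEmbedding.piMap (fun _ : ℕ => Topology.IsEmbedding.subtypeVal), ?_⟩
    have : Set.range (fun (x : ℕ → ↥A) (n : ℕ) => (x n : B)) = Set.pi Set.univ (fun _ => A) := by
      ext y
      constructor
      · rintro ⟨x, rfl⟩ n _
        exact (x n).2
      · intro h
        exact ⟨fun n => ⟨y n, h n trivial⟩, rfl⟩
    rw [this]
    exact isClosed_set_pi (fun _ _ => isClosed_discrete A)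
  have hU : ∀ i, ∃ U : ℕ → Set (ℕ → ↥A), (∀ j, IsOpen (U j)) ∧ G i = ⋂ j, U j :=
    fun i => isGδ_iff_eq_iInter_nat.1 (hG i)
  choose U hUo hUG using hU
  have hK : ∀ i j, ∃ K : ℕ → Set (ℕ → ↥A), (∀ k, IsClosed (K k)) ∧ ⋃ k, K k = U i j := by
    intro i j
    letI := TopologicalSpace.metrizableSpaceMetric (ℕ → ↥A)
    obtain ⟨K, h1, -, h2, -⟩ := (hUo i j).exists_iUnion_isClosed
    exact ⟨K, h1, h2⟩
  choose K hKc hKU using hK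
  refine ⟨fun i j k => (fun (x : ℕ → ↥A) (n : ℕ) => (x n : B)) '' K i j k,
    fun i j k => hcl.isClosedMap _ (hKc i j k), ?_⟩
  simp only [← Set.image_iUnion, hKU, ← hinj.injOn.image_iInter_eq, ← hUG, hS]
end
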